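/- arXiv:1611.02380 — 2 statements merged into one kernel-verified Lean document; each statement's English description precedes it below -/
import Mathlib

section
/- Let N ≥ 1 be an integer, v > 0, p_c > 0, E_p > 0, p_u > 0, and Ē_u > 0 be real numbers, and let f_i = (1/i^v)/(Σ_{j=1}^N 1/j^v) for 1 ≤ i ≤ N. If an integer i with 1 ≤ i ≤ N satisfies i ≤ ( N·p_u·Ē_u / (p_c·E_p·Σ_{j=1}^{N} 1/j^v) )^{1/v}, then E_p ≤ (N/p_c)·p_u·f_i·Ē_u, i.e. the energy consumption to push content c_i is no more than the expected total energy consumption for unicasting c_i upon requests during its lifetime. -/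
/-!
With `S = ∑ 1/j^v > 0`, the map `x ↦ x ^ v` is increasing on the nonnegative reals, so the
hypothesis gives `i ^ v ≤ N p_u Ē_u / (p_c E_p S)`. All factors are positive, so `E_p` and
`i ^ v` can be exchanged across the inequality, which is the claim since `f i = 1 / (i ^ v S)`.
-/

/-- Lemma 3 (energy-efficient push condition): if content `c_i` satisfies
`i ≤ (N p_u Ē_u / (p_c E_p ∑_{j=1}^N 1/j^v))^{1/v}` then the push energy `E_p`
is at most the expected unicast energy `(N/p_c) p_u f_i Ē_u` for `c_i`. -/
theorem stmt_2 (N : ℕ) (hN : 1 ≤ N) (v p_c Ep p_u Eu : ℝ)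
    (hv : 0 < v) (hpc : 0 < p_c) (hEp : 0 < Ep) (hpu : 0 < p_u) (hEu : 0 < Eu)
    (f : ℕ → ℝ)
    (hf : ∀ i, f i = (1 / (i : ℝ) ^ v) / (∑ j ∈ Finset.Icc 1 N, 1 / (j : ℝ) ^ v))
    (i : ℕ) (hi1 : 1 ≤ i) (hiN : i ≤ N)
    (hcond : (i : ℝ)
      ≤ ((N : ℝ) * p_u * Eu / (p_c * Ep * ∑ j ∈ Finset.Icc 1 N, 1 / (j : ℝ) ^ v)) ^ (1 / v)) :
    Ep ≤ ((N : ℝ) / p_c) * p_u * f i * Eu := by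
  have hS : 0 < ∑ j ∈ Finset.Icc 1 N, 1 / (j : ℝ) ^ v := by
    apply Finset.sum_pos
    · intro j hj
      have hj0 : (0 : ℝ) < j := by exact_mod_cast (Finset.mem_Icc.mp hj).1
      positivity
    · exact ⟨1, Finset.mem_Icc.mpr ⟨le_rfl, hN⟩⟩
  rw [hf i]
  set S := ∑ j ∈ Finset.Icc 1 N, 1 / (j : ℝ) ^ v
  have hi0 : (0 : ℝ) < i := by exact_mod_cast hi1
  have hiv : 0 < (i : ℝ) ^ v := Real.rpow_pos_of_pos hi0 v
  -- Raising the hypothesis to the power `v` removes the exponent `1 / v`.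
  have hpow : (i : ℝ) ^ v ≤ (N : ℝ) * p_u * Eu / (p_c * Ep * S) := by
    have h := Real.rpow_le_rpow hi0.le hcond hv.le
    rwa [← Real.rpow_mul (by positivity), one_div_mul_cancel hv.ne', Real.rpow_one] at h
  rw [le_div_iff₀ (by positivity)] at hpow
  have heq : (N : ℝ) / p_c * p_u * (1 / (i : ℝ) ^ v / S) * Eu
      = (N : ℝ) * p_u * Eu / ((i : ℝ) ^ v * (p_c * S)) := by
    field_simp
  rw [heq, le_div_iff₀ (by positivity)]
  linarith
end

section
/- Let N ≥ 1 be an integer and let v > 0, p_c > 0, E_p > 0, p_u > 0, Ē_u > 0 be real numbers, and define f_i = (1/i^v)/(Σ_{j=1}^N 1/j^v) for 1 ≤ i ≤ N and X = N·p_u·Ē_u / (p_c·E_p·Σ_{j=1}^{N} 1/j^v). Define C_EE = min{ N, ⌊X^{1/v}⌋ }. Then C_EE is the greatest integer C with 0 ≤ C ≤ N such that every integer i with 1 ≤ i ≤ C satisfies E_p ≤ (N/p_c)·p_u·f_i·Ē_u; equivalently, for any integer i with 1 ≤ i ≤ N, E_p ≤ (N/p_c)·p_u·f_i·Ē_u holds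 if and only if i ≤ C_EE. -/
/-!
Clearing the positive denominators turns the push condition for content `i` into `i ^ v ≤ X`.
Since `v > 0`, this is `i ≤ X ^ (1 / v)`, that is `i ≤ ⌊X ^ (1 / v)⌋₊`, which for `i ≤ N` is
`i ≤ Cee`. Maximality of `Cee` follows by applying this equivalence at `i = C`.
-/

/-- The energy-efficient threshold `C_EE = min{N, ⌊X^{1/v}⌋}` with
`X = N p_u Ē_u /(p_c E_p ∑_{j=1}^N 1/j^v)` is the greatest integer `C ≤ N` such
that every `1 ≤ i ≤ C` satisfies the push condition `E_p ≤ (N/p_c) p_u f_i Ē_u`;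
equivalently, for `1 ≤ i ≤ N`, the push condition holds iff `i ≤ C_EE`. -/
theorem stmt_11 (N : ℕ) (hN : 1 ≤ N) (v p_c Ep p_u Eu : ℝ)
    (hv : 0 < v) (hpc : 0 < p_c) (hEp : 0 < Ep) (hpu : 0 < p_u) (hEu : 0 < Eu)
    (f : ℕ → ℝ)
    (hf : ∀ i, f i = (1 / (i : ℝ) ^ v) / (∑ j ∈ Finset.Icc 1 N, 1 / (j : ℝ) ^ v))
    (X : ℝ)
    (hX : X = (N : ℝ) * p_u * Eu / (p_c * Ep * ∑ j ∈ Finset.Icc 1 N, 1 / (j : ℝ) ^ v))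
    (Cee : ℕ) (hCee : Cee = min N ⌊X ^ (1 / v)⌋₊) :
    (Cee ≤ N ∧
      (∀ i : ℕ, 1 ≤ i → i ≤ Cee → Ep ≤ ((N : ℝ) / p_c) * p_u * f i * Eu) ∧
      (∀ C : ℕ, C ≤ N →
        (∀ i : ℕ, 1 ≤ i → i ≤ C → Ep ≤ ((N : ℝ) / p_c) * p_u * f i * Eu) →
        C ≤ Cee)) ∧
    (∀ i : ℕ, 1 ≤ i → i ≤ N →
      (Ep ≤ ((N : ℝ) / p_c) * p_u * f i * Eu ↔ i ≤ Cee)) := by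
  have hS : 0 < ∑ j ∈ Finset.Icc 1 N, 1 / (j : ℝ) ^ v := by
    refine Finset.sum_pos (fun j hj => ?_) ⟨1, Finset.mem_Icc.mpr ⟨le_rfl, hN⟩⟩
    have hj0 : (0 : ℝ) < j := by exact_mod_cast (Finset.mem_Icc.mp hj).1
    positivity
  set S := ∑ j ∈ Finset.Icc 1 N, 1 / (j : ℝ) ^ v
  have hX0 : 0 ≤ X := by rw [hX]; positivity
  have key : ∀ i : ℕ, 1 ≤ i → i ≤ N →
      (Ep ≤ ((N : ℝ) / p_c) * p_u * f i * Eu ↔ i ≤ Cee) := by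
    intro i hi hiN
    have hi0 : (0 : ℝ) < i := by exact_mod_cast hi
    have hiv : (0 : ℝ) < (i : ℝ) ^ v := by positivity
    have hpush : Ep ≤ ((N : ℝ) / p_c) * p_u * f i * Eu ↔ (i : ℝ) ^ v ≤ X := by
      have e : ((N : ℝ) / p_c) * p_u * f i * Eu = N * p_u * Eu / (p_c * S * (i : ℝ) ^ v) := by
        rw [hf]; field_simp
      rw [e, hX, le_div_iff₀ (by positivity), le_div_iff₀ (by positivity)]
      ring_nf
    rw [hpush, hCee, le_min_iff, Nat.le_floor_iff (by positivity), one_div,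
      Real.le_rpow_inv_iff_of_pos hi0.le hX0 hv]
    exact ⟨fun h => ⟨hiN, h⟩, fun h => h.2⟩
  have hCN : Cee ≤ N := hCee ▸ min_le_left _ _
  refine ⟨⟨hCN, fun i hi hiC => (key i hi (hiC.trans hCN)).2 hiC, fun C hC h => ?_⟩, key⟩
  rcases Nat.eq_zero_or_pos C with rfl | hpos
  · exact Nat.zero_le _
  · exact (key C hpos hC).1 (h C hpos le_rfl)
end
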